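/- For every n ∈ ℕ there exist r, s ∈ ℕ and a constant C_n ∈ ℝ such that for all φ, ψ in the Schwartz space S(ℝ^d), |φψ|_n ≤ C_n · |φ|_r · |ψ|_s, where φψ denotes the pointwise product. -/

import Mathlib

open MeasureTheory

noncomputable def hermitePoly (n : ℕ) (x : ℝ) : ℝ :=
  (-1 : ℝ) ^ n * Real.exp (x ^ 2 / 2) *
    iteratedDeriv n (fun y : ℝ => Real.exp (-(y ^ 2 / 2))) x

noncomputable def hermiteFun (n : ℕ) (x : ℝ) : ℝ :=
  (Real.sqrt (Real.sqrt (2 * Real.pi) * n.factorial))⁻¹ *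
    Real.exp (-(x ^ 2 / 4)) * hermitePoly n x

noncomputable def hermiteFunMulti (d : ℕ) (α : Fin d → ℕ) (x : EuclideanSpace ℝ (Fin d)) : ℝ :=
  ∏ i, hermiteFun (α i) (x i)

noncomputable def hermCoeff (d : ℕ) (f : EuclideanSpace ℝ (Fin d) → ℝ) (β : Fin d → ℕ) : ℝ :=
  ∫ x, f x * hermiteFunMulti d β x

noncomputable def hermNorm (d n : ℕ) (f : EuclideanSpace ℝ (Fin d) → ℝ) : ℝ :=
  Real.sqrt (∑' β : Fin d → ℕ,
    (((2 * ∑ i, β i) + d : ℕ) : ℝ) ^ (2 * n) * hermCoeff d f β ^ 2)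

/-!
The Hermite functions are eigenfunctions of `N = |x|²/2 - 2Δ` with eigenvalues `2|α| + d`, so a
factor `2|α| + d` in front of the coefficients of `φψ` amounts to replacing `φψ` by
`N(φψ) = (Nφ)ψ - ∑ᵢ (4 ∂ᵢφ ∂ᵢψ + 2 φ ∂ᵢ²ψ)`. Since `N` and `∂ᵢ` are bounded from one Hermite norm
to another, induction on the weight reduces everything to unweighted coefficients, where Bessel's
inequality gives `|⟨φψ, h_α⟩| ≤ sup |φ| · ‖ψ‖₂`. The Hermite expansion of a Schwartz function
converges absolutely and uniformly, which controls `sup |φ|` and gives `‖ψ‖₂ = |ψ|_0`. Bounds on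
single coefficients become bounds on norms because `∑_α (2|α| + d)^{-2d}` converges.

The expansion represents the function because the Hermite functions are complete: if a bounded
continuous `g` is orthogonal to all of them, then all moments of `g e^{-|x|²/4}` vanish, and these
are the Taylor coefficients of its Fourier transform along lines.
-/

open Polynomial SchwartzMap LineDeriv FourierTransform

/-! ### Hermite functions of one variable -/

/-- The constant `(√(2π) n!)^{-1/2}` normalizing the Hermite function of degree `n` in `L²(ℝ)`. -/
noncomputable def hermiteConst (n : ℕ) : ℝ :=
  (√(√(2 * Real.pi) * n.factorial))⁻¹

lemma hermiteConst_pos (n : ℕ) : 0 < hermiteConst n := by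
  unfold hermiteConst; positivity

lemma sqrt_mul_hermiteConst_succ (n : ℕ) : √(n + 1) * hermiteConst (n + 1) = hermiteConst n := by
  have h : √(2 * Real.pi) * (n + 1).factorial =
      ((n : ℝ) + 1) * (√(2 * Real.pi) * n.factorial) := by
    rw [Nat.factorial_succ]; push_cast; ring
  rw [hermiteConst, h, Real.sqrt_mul (by positivity), mul_inv,
    mul_inv_cancel_left₀ (by positivity), hermiteConst]

lemma sqrt_mul_hermiteConst_pred (n : ℕ) : √n * hermiteConst (n - 1) = n * hermiteConst n := by
  rcases n with _ | n
  · simp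
  · rw [Nat.add_sub_cancel, ← sqrt_mul_hermiteConst_succ, Nat.cast_succ, ← mul_assoc,
      Real.mul_self_sqrt (by positivity)]

lemma derivative_hermite (n : ℕ) :
    derivative (hermite n) = (n : ℤ[X]) * hermite (n - 1) := by
  induction n with
  | zero => simp
  | succ n ih =>
    rcases n with _ | n
    · simp
    · have recurrence := hermite_succ n
      rw [Nat.add_sub_cancel] at ih ⊢
      rw [hermite_succ (n + 1), derivative_sub, derivative_mul, ih, derivative_X, derivative_mul,
        derivative_natCast]
      push_cast
      linear_combination (-((n : ℤ[X]) + 1)) * recurrence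

lemma hermiteFun_eq_aeval (n : ℕ) (x : ℝ) :
    hermiteFun n x = hermiteConst n * Real.exp (-(x ^ 2 / 4)) * aeval x (hermite n) := by
  rw [hermiteFun, hermitePoly, hermite_eq_deriv_gaussian', iteratedDeriv_eq_iterate, hermiteConst]
  ring

lemma sqrt_mul_hermiteFun_pred (n : ℕ) (x : ℝ) :
    √n * hermiteFun (n - 1) x =
      hermiteConst n * Real.exp (-(x ^ 2 / 4)) * aeval x (derivative (hermite n)) := by
  rw [hermiteFun_eq_aeval, derivative_hermite, map_mul, map_natCast]
  linear_combination (Real.exp (-(x ^ 2 / 4)) * aeval x (hermite (n - 1))) *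
    sqrt_mul_hermiteConst_pred n

lemma sqrt_mul_hermiteFun_succ (n : ℕ) (x : ℝ) :
    √(n + 1) * hermiteFun (n + 1) x = hermiteConst n * Real.exp (-(x ^ 2 / 4)) *
      (x * aeval x (hermite n) - aeval x (derivative (hermite n))) := by
  rw [hermiteFun_eq_aeval, hermite_succ, map_sub, map_mul, aeval_X]
  linear_combination (Real.exp (-(x ^ 2 / 4)) *
    (x * aeval x (hermite n) - aeval x (derivative (hermite n)))) * sqrt_mul_hermiteConst_succ n

lemma mul_hermiteFun (n : ℕ) (x : ℝ) :
    x * hermiteFun n x = √n * hermiteFun (n - 1) x + √(n + 1) * hermiteFun (n + 1) x := by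
  rw [sqrt_mul_hermiteFun_pred, sqrt_mul_hermiteFun_succ, hermiteFun_eq_aeval]
  ring

lemma hasDerivAt_hermiteFun (n : ℕ) (x : ℝ) :
    HasDerivAt (hermiteFun n)
      (√n / 2 * hermiteFun (n - 1) x - √(n + 1) / 2 * hermiteFun (n + 1) x) x := by
  have gaussian : HasDerivAt (fun y : ℝ => Real.exp (-(y ^ 2 / 4)))
      (Real.exp (-(x ^ 2 / 4)) * (-(x / 2))) x :=
    (((hasDerivAt_pow 2 x).div_const 4).neg.congr_deriv (by ring)).exp
  have product := (gaussian.const_mul (hermiteConst n)).mul ((hermite n).hasDerivAt_aeval x)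
  rw [show hermiteFun n = _ from funext (hermiteFun_eq_aeval n)]
  refine product.congr_deriv ?_
  linear_combination (-1 / 2) * sqrt_mul_hermiteFun_pred n x +
    (1 / 2) * sqrt_mul_hermiteFun_succ n x

lemma continuous_hermiteFun (n : ℕ) : Continuous (hermiteFun n) :=
  continuous_iff_continuousAt.2 fun x => (hasDerivAt_hermiteFun n x).continuousAt

lemma integrable_aeval_mul_exp_neg_mul_sq {R : Type*} [CommSemiring R] [Algebra R ℝ] (P : R[X])
    {b : ℝ} (hb : 0 < b) : Integrable fun x : ℝ => aeval x P * Real.exp (-b * x ^ 2) := by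
  induction P using Polynomial.induction_on' with
  | add P Q hP hQ => simpa only [map_add, add_mul, Pi.add_def] using hP.add hQ
  | monomial k a =>
    have hk : (-1 : ℝ) < k := by linarith [k.cast_nonneg (α := ℝ)]
    simpa only [aeval_monomial, Real.rpow_natCast, mul_assoc] using
      (integrable_rpow_mul_exp_neg_mul_sq hb hk).const_mul (algebraMap R ℝ a)

lemma integrable_hermiteFun (n : ℕ) : Integrable (hermiteFun n) := by
  refine ((integrable_aeval_mul_exp_neg_mul_sq (hermite n) (b := 1 / 4) (by norm_num)).const_mul
    (hermiteConst n)).congr (.of_forall fun x => ?_)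
  have hexp : -(1 / 4) * x ^ 2 = -(x ^ 2 / 4) := by ring
  simp only [hermiteFun_eq_aeval, hexp]
  ring

lemma integrable_hermiteFun_mul_hermiteFun (a b : ℕ) :
    Integrable fun x => hermiteFun a x * hermiteFun b x := by
  refine ((integrable_aeval_mul_exp_neg_mul_sq (hermite a * hermite b) (b := 1 / 2)
    (by norm_num)).const_mul (hermiteConst a * hermiteConst b)).congr (.of_forall fun x => ?_)
  have hexp : Real.exp (-(1 / 2) * x ^ 2) =
      Real.exp (-(x ^ 2 / 4)) * Real.exp (-(x ^ 2 / 4)) := by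
    rw [← Real.exp_add]; ring_nf
  simp only [hermiteFun_eq_aeval, hexp, map_mul]
  ring

lemma sqrt_mul_integral_hermiteFun_mul_succ (a b : ℕ) :
    √(b + 1) * ∫ x, hermiteFun a x * hermiteFun (b + 1) x =
      √a * ∫ x, hermiteFun (a - 1) x * hermiteFun b x := by
  have hderiv : ∀ x, HasDerivAt (fun y => hermiteFun a y * hermiteFun b y)
      (√a * (hermiteFun (a - 1) x * hermiteFun b x) -
        √(b + 1) * (hermiteFun a x * hermiteFun (b + 1) x)) x := fun x =>
    ((hasDerivAt_hermiteFun a x).mul (hasDerivAt_hermiteFun b x)).congr_deriv (by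
      linear_combination (hermiteFun b x / 2) * mul_hermiteFun a x -
        (hermiteFun a x / 2) * mul_hermiteFun b x)
  have hleft := (integrable_hermiteFun_mul_hermiteFun (a - 1) b).const_mul √a
  have hright := (integrable_hermiteFun_mul_hermiteFun a (b + 1)).const_mul √(b + 1)
  have hzero := integral_eq_zero_of_hasDerivAt_of_integrable hderiv (hleft.sub hright)
    (integrable_hermiteFun_mul_hermiteFun a b)
  rw [integral_sub hleft hright, integral_const_mul, integral_const_mul] at hzero
  linarith

lemma integral_hermiteFun_zero_mul_self : ∫ x, hermiteFun 0 x * hermiteFun 0 x = 1 := by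
  have hgauss : ∀ x, hermiteFun 0 x * hermiteFun 0 x =
      hermiteConst 0 * hermiteConst 0 * Real.exp (-(1 / 2) * x ^ 2) := fun x => by
    rw [hermiteFun_eq_aeval, hermite_zero, aeval_C, map_one, mul_one, mul_mul_mul_comm,
      ← Real.exp_add]
    ring_nf
  simp_rw [hgauss]
  rw [integral_const_mul, integral_gaussian, show Real.pi / (1 / 2) = 2 * Real.pi by ring,
    hermiteConst, ← mul_inv, Real.mul_self_sqrt (by positivity), Nat.factorial_zero, Nat.cast_one,
    mul_one, inv_mul_cancel₀ (by positivity)]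

theorem integral_hermiteFun_mul_hermiteFun (a b : ℕ) :
    ∫ x, hermiteFun a x * hermiteFun b x = if a = b then 1 else 0 := by
  induction b generalizing a with
  | zero =>
    rcases a with _ | a
    · simpa using integral_hermiteFun_zero_mul_self
    · have h := sqrt_mul_integral_hermiteFun_mul_succ 0 a
      rw [Nat.cast_zero, Real.sqrt_zero, zero_mul, mul_eq_zero] at h
      simpa [mul_comm] using h.resolve_left (by positivity)
  | succ b ih =>
    have hb : √((b : ℝ) + 1) ≠ 0 := by positivity
    have h := sqrt_mul_integral_hermiteFun_mul_succ a b
    rw [ih] at h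
    apply mul_left_cancel₀ hb
    rcases a with _ | a
    · simpa using h
    · rw [h]
      rcases eq_or_ne a b with rfl | hab
      · simp
      · simp [hab]

lemma sq_le_integral_sq_add_sq_deriv {f f' : ℝ → ℝ} (hderiv : ∀ x, HasDerivAt f (f' x) x)
    (hf : MemLp f 2) (hf' : MemLp f' 2) (x : ℝ) : f x ^ 2 ≤ ∫ y, (f y ^ 2 + f' y ^ 2) := by
  have hsq : ∀ y, HasDerivAt (fun y => f y ^ 2) (2 * (f y * f' y)) y := fun y =>
    ((hderiv y).pow 2).congr_deriv (by ring)
  have hint : Integrable (fun y => 2 * (f y * f' y)) := (hf.integrable_mul hf').const_mul 2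
  have hbound : Integrable (fun y => f y ^ 2 + f' y ^ 2) := hf.integrable_sq.add hf'.integrable_sq
  have hlim := tendsto_zero_of_hasDerivAt_of_integrableOn_Iic (a := x) (fun y _ => hsq y)
    hint.integrableOn hf.integrable_sq.integrableOn
  have hftc :=
    integral_Iic_of_hasDerivAt_of_tendsto' (a := x) (fun y _ => hsq y) hint.integrableOn hlim
  calc f x ^ 2 = ∫ y in Set.Iic x, 2 * (f y * f' y) := by rw [hftc, sub_zero]
    _ ≤ ∫ y in Set.Iic x, (f y ^ 2 + f' y ^ 2) :=
      setIntegral_mono hint.integrableOn hbound.integrableOn fun y => by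
        linarith [two_mul_le_add_sq (f y) (f' y)]
    _ ≤ ∫ y, (f y ^ 2 + f' y ^ 2) :=
      setIntegral_le_integral hbound (.of_forall fun y => by positivity)

lemma memLp_two_hermiteFun (n : ℕ) : MemLp (hermiteFun n) 2 :=
  (memLp_two_iff_integrable_sq (continuous_hermiteFun n).aestronglyMeasurable).2 <| by
    simpa only [sq] using integrable_hermiteFun_mul_hermiteFun n n

lemma integral_hermiteFun_sq (n : ℕ) : ∫ x, hermiteFun n x ^ 2 = 1 := by
  simpa only [sq, if_true] using integral_hermiteFun_mul_hermiteFun n n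

lemma abs_hermiteFun_le (n : ℕ) (x : ℝ) : |hermiteFun n x| ≤ 2 * (n + 1) := by
  have hL2 : ∀ k, Integrable fun y => hermiteFun k y ^ 2 := fun k =>
    (memLp_two_hermiteFun k).integrable_sq
  have hderiv_sq : ∀ y,
      (√n / 2 * hermiteFun (n - 1) y - √(n + 1) / 2 * hermiteFun (n + 1) y) ^ 2 ≤
      n / 2 * hermiteFun (n - 1) y ^ 2 + (n + 1) / 2 * hermiteFun (n + 1) y ^ 2 := fun y => by
    have h₁ := Real.sq_sqrt (Nat.cast_nonneg (α := ℝ) n)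
    have h₂ := Real.sq_sqrt (x := (n : ℝ) + 1) (by positivity)
    calc _ ≤ 2 * ((√n / 2 * hermiteFun (n - 1) y) ^ 2 +
          (√(n + 1) / 2 * hermiteFun (n + 1) y) ^ 2) := by
          rw [sub_eq_add_neg, ← neg_sq (√(n + 1) / 2 * _)]; exact add_sq_le
      _ = _ := by rw [mul_pow, mul_pow, div_pow, div_pow, h₁, h₂]; ring
  have hsobolev := sq_le_integral_sq_add_sq_deriv (hasDerivAt_hermiteFun n)
    (memLp_two_hermiteFun n) (((memLp_two_hermiteFun _).const_mul _).sub
      ((memLp_two_hermiteFun _).const_mul _)) x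
  have hpair : Integrable fun y =>
      n / 2 * hermiteFun (n - 1) y ^ 2 + (n + 1) / 2 * hermiteFun (n + 1) y ^ 2 :=
    ((hL2 _).const_mul _).add ((hL2 _).const_mul _)
  have hsq : hermiteFun n x ^ 2 ≤ 1 + (n / 2 + (n + 1) / 2) := by
    refine hsobolev.trans ((integral_mono_of_nonneg (.of_forall fun y => by positivity)
      ((hL2 n).add hpair) (.of_forall fun y => add_le_add_right (hderiv_sq y) _)).trans_eq ?_)
    simp only [Pi.add_apply]
    rw [integral_add (hL2 n) hpair, integral_add ((hL2 _).const_mul _) ((hL2 _).const_mul _),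
      integral_const_mul, integral_const_mul, integral_hermiteFun_sq, integral_hermiteFun_sq,
      integral_hermiteFun_sq, mul_one, mul_one]
  apply abs_le_of_sq_le_sq _ (by positivity)
  nlinarith [n.cast_nonneg (α := ℝ)]

/-! ### Vanishing moments -/

section

variable {V : Type*} [NormedAddCommGroup V] [InnerProductSpace ℝ V] [FiniteDimensional ℝ V]
  [MeasurableSpace V] [BorelSpace V]

lemma hasSum_integral_inner_pow_mul {f : V → ℂ}
    (hexp : ∀ c : ℝ, Integrable fun x => (Real.exp (c * ‖x‖) : ℂ) * f x) (ξ : V) :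
    HasSum (fun k : ℕ => (↑(-2 * Real.pi) * Complex.I) ^ k / (k.factorial : ℂ) *
      ∫ x, (inner ℝ x ξ : ℂ) ^ k * f x) (𝓕 f ξ) := by
  have hf : Integrable f := by simpa using hexp 0
  have hterm : ∀ (k : ℕ) (x : V), (↑(-2 * Real.pi) * Complex.I) ^ k / (k.factorial : ℂ) *
      ((inner ℝ x ξ : ℂ) ^ k * f x) =
        (↑(-2 * Real.pi * inner ℝ x ξ) * Complex.I) ^ k / (k.factorial : ℂ) * f x := by
    intro k x; push_cast; ring
  have hbound : ∀ x, HasSum (fun k : ℕ => |-2 * Real.pi * inner ℝ x ξ| ^ k / k.factorial * ‖f x‖)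
      (Real.exp |-2 * Real.pi * inner ℝ x ξ| * ‖f x‖) := fun x => by
    refine HasSum.mul_right ‖f x‖ ?_
    rw [Real.exp_eq_exp_ℝ]
    exact NormedSpace.expSeries_div_hasSum_exp _
  have hbound_int : Integrable fun x => Real.exp |-2 * Real.pi * inner ℝ x ξ| * ‖f x‖ := by
    refine (hexp (2 * Real.pi * ‖ξ‖)).norm.mono' ?_ (.of_forall fun x => ?_)
    · exact (Continuous.aestronglyMeasurable (by fun_prop)).mul hf.aestronglyMeasurable.norm
    · simp only [norm_mul, norm_norm, Complex.norm_real, Real.norm_of_nonneg (Real.exp_nonneg _)]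
      gcongr
      rw [abs_mul, neg_mul, abs_neg, abs_of_pos Real.two_pi_pos, mul_assoc _ ‖ξ‖, mul_comm ‖ξ‖]
      gcongr
      exact abs_real_inner_le_norm x ξ
  simp only [← integral_const_mul, hterm, Real.fourier_eq', smul_eq_mul]
  have hmeas : ∀ k : ℕ, AEStronglyMeasurable fun x =>
      (↑(-2 * Real.pi * inner ℝ x ξ) * Complex.I) ^ k / (k.factorial : ℂ) * f x := fun k =>
    (Continuous.aestronglyMeasurable (by fun_prop)).mul hf.aestronglyMeasurable
  have hexpansion : ∀ x, HasSum (fun k : ℕ =>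
      (↑(-2 * Real.pi * inner ℝ x ξ) * Complex.I) ^ k / (k.factorial : ℂ) * f x)
      (Complex.exp (↑(-2 * Real.pi * inner ℝ x ξ) * Complex.I) * f x) := fun x => by
    refine HasSum.mul_right (f x) ?_
    rw [Complex.exp_eq_exp_ℂ]
    exact NormedSpace.expSeries_div_hasSum_exp _
  have hbound_sum : Integrable fun x =>
      ∑' k : ℕ, |-2 * Real.pi * inner ℝ x ξ| ^ k / k.factorial * ‖f x‖ :=
    hbound_int.congr (.of_forall fun x => (hbound x).tsum_eq.symm)
  exact hasSum_integral_of_dominated_convergence _ hmeas (fun k => .of_forall fun x => by simp)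
    (.of_forall fun x => (hbound x).summable) hbound_sum (.of_forall hexpansion)

theorem eq_zero_of_integral_inner_pow_mul_eq_zero {f : V → ℂ} (hf : Continuous f)
    (hexp : ∀ c : ℝ, Integrable fun x => (Real.exp (c * ‖x‖) : ℂ) * f x)
    (hmoment : ∀ (k : ℕ) (ξ : V), ∫ x, (inner ℝ x ξ : ℂ) ^ k * f x = 0) : f = 0 := by
  have hfourier : 𝓕 f = 0 := funext fun ξ => by
    have hseries := hasSum_integral_inner_pow_mul hexp ξ
    simp only [hmoment, mul_zero] at hseries
    exact hseries.unique hasSum_zero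
  have hinversion := hf.fourierInv_fourier_eq (by simpa using hexp 0)
    (by rw [hfourier]; exact integrable_zero _ _ _)
  rw [← hinversion, hfourier]
  funext x
  simp [Real.fourierInv_eq']

lemma integrable_exp_mul_norm_mul_exp_neg_sq (c : ℝ) :
    Integrable fun x : V => Real.exp (c * ‖x‖) * Real.exp (-(‖x‖ ^ 2 / 4)) := by
  have hgauss := (GaussianFourier.integrable_cexp_neg_mul_sq_norm_add (V := V)
    (b := (1 / 8 : ℝ)) (by rw [Complex.ofReal_re]; norm_num) 0 0).norm
  refine (hgauss.const_mul (Real.exp (2 * c ^ 2))).mono' (by fun_prop) (.of_forall fun x => ?_)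
  have hre : (-((1 / 8 : ℝ) : ℂ) * (‖x‖ : ℂ) ^ 2 + 0 * ((inner ℝ 0 x : ℝ) : ℂ)).re =
      -(1 / 8) * ‖x‖ ^ 2 := by
    rw [zero_mul, add_zero, ← Complex.ofReal_pow, ← Complex.ofReal_neg, ← Complex.ofReal_mul,
      Complex.ofReal_re]
  rw [Complex.norm_exp, hre, Real.norm_of_nonneg (by positivity), ← Real.exp_add, ← Real.exp_add]
  apply Real.exp_le_exp.2
  nlinarith [sq_nonneg (‖x‖ - 4 * c)]

end

section

variable {d : ℕ}

/-! ### Hermite functions of several variables -/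

lemma integral_prod_apply (f : Fin d → ℝ → ℝ) :
    ∫ x : EuclideanSpace ℝ (Fin d), ∏ i, f i (x i) = ∏ i, ∫ t, f i t := by
  rw [← integral_fintype_prod_volume_eq_prod]
  exact (EuclideanSpace.volume_preserving_symm_measurableEquiv_toLp (Fin d)).integral_comp'
    fun y : Fin d → ℝ => ∏ i, f i (y i)

lemma integrable_prod_apply {f : Fin d → ℝ → ℝ} (hf : ∀ i, Integrable (f i)) :
    Integrable fun x : EuclideanSpace ℝ (Fin d) => ∏ i, f i (x i) :=
  (EuclideanSpace.volume_preserving_symm_measurableEquiv_toLp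
    (Fin d)).integrable_comp_of_integrable (Integrable.fintype_prod hf)

/-- The eigenvalue `2|α| + d` of the Hermite operator on the Hermite function of index `α`. -/
noncomputable def hermiteEigenvalue (α : Fin d → ℕ) : ℝ :=
  (2 * ∑ i, α i + d : ℕ)

lemma hermiteEigenvalue_nonneg (α : Fin d → ℕ) : 0 ≤ hermiteEigenvalue α :=
  Nat.cast_nonneg _

lemma hermiteEigenvalue_eq_sum (α : Fin d → ℕ) :
    hermiteEigenvalue α = ∑ i, (2 * (α i : ℝ) + 1) := by
  simp [hermiteEigenvalue, Finset.sum_add_distrib, Finset.mul_sum]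

lemma one_le_hermiteEigenvalue (hd : 0 < d) (α : Fin d → ℕ) : 1 ≤ hermiteEigenvalue α :=
  Nat.one_le_cast.2 (by omega)

lemma hermiteEigenvalue_mono : Monotone (hermiteEigenvalue (d := d)) := fun α β h => by
  simp only [hermiteEigenvalue_eq_sum]
  gcongr with i
  exact h i

lemma hermiteEigenvalue_add_single_le (α : Fin d → ℕ) (i : Fin d) :
    hermiteEigenvalue (α + Pi.single i 1) ≤ 3 * hermiteEigenvalue α := by
  have hd : 0 < d := i.pos
  simp only [hermiteEigenvalue, Pi.add_apply, Finset.sum_add_distrib, Finset.sum_pi_single',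
    Finset.mem_univ, if_true]
  norm_cast
  omega

lemma add_one_le_hermiteEigenvalue (α : Fin d → ℕ) (i : Fin d) :
    (α i : ℝ) + 1 ≤ hermiteEigenvalue α := by
  have hle : α i ≤ ∑ j, α j := Finset.single_le_sum (fun _ _ => Nat.zero_le _) (Finset.mem_univ i)
  have hd : 0 < d := i.pos
  unfold hermiteEigenvalue
  norm_cast
  omega

lemma sqrt_add_one_le_hermiteEigenvalue (α : Fin d → ℕ) (i : Fin d) :
    √(α i + 1 : ℝ) ≤ hermiteEigenvalue α :=
  (Real.sqrt_le_self_iff.2 (.inr (le_add_of_nonneg_left (Nat.cast_nonneg _)))).trans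
    (add_one_le_hermiteEigenvalue α i)

lemma prod_add_one_le_hermiteEigenvalue_pow (α : Fin d → ℕ) :
    ∏ i, ((α i : ℝ) + 1) ≤ hermiteEigenvalue α ^ d := by
  simpa using Finset.prod_le_prod (s := Finset.univ) (fun i _ => by positivity)
    fun i _ => add_one_le_hermiteEigenvalue α i

lemma hermiteEigenvalue_pow_pos (α : Fin d → ℕ) : 0 < hermiteEigenvalue α ^ d :=
  lt_of_lt_of_le (by positivity) (prod_add_one_le_hermiteEigenvalue_pow α)

lemma summable_prod_add_one_inv_sq (d : ℕ) :
    Summable fun α : Fin d → ℕ => (∏ i, ((α i : ℝ) + 1))⁻¹ ^ 2 := by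
  induction d with
  | zero => exact (hasSum_fintype _).summable
  | succ d ih =>
    have hone : Summable fun n : ℕ => ((n : ℝ) + 1)⁻¹ ^ 2 := by
      simpa using (summable_nat_add_iff 1).2 (Real.summable_nat_pow_inv.2 one_lt_two)
    rw [← (Fin.consEquiv fun _ : Fin (d + 1) => ℕ).summable_iff]
    refine (hone.mul_of_nonneg ih (fun n => by positivity) fun α => by positivity).congr
      fun x => ?_
    simp only [Function.comp_apply, Fin.prod_univ_succ, Fin.consEquiv_apply, Fin.cons_zero,
      Fin.cons_succ, mul_inv, mul_pow]

lemma summable_hermiteEigenvalue_pow_inv_sq (d : ℕ) :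
    Summable fun α : Fin d → ℕ => (hermiteEigenvalue α ^ d)⁻¹ ^ 2 := by
  refine (summable_prod_add_one_inv_sq d).of_nonneg_of_le (fun α => by positivity) fun α => ?_
  have := hermiteEigenvalue_pow_pos α
  gcongr
  exact prod_add_one_le_hermiteEigenvalue_pow α

/-- The Hilbert–Schmidt constant `∑_α (2|α| + d)^{-2d}`, which is the price of passing from
bounds on single Hermite coefficients to bounds on sums over all of them. -/
noncomputable def hermiteSum (d : ℕ) : ℝ :=
  ∑' α : Fin d → ℕ, (hermiteEigenvalue α ^ d)⁻¹ ^ 2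

lemma hermiteSum_nonneg (d : ℕ) : 0 ≤ hermiteSum d :=
  tsum_nonneg fun α => by positivity

lemma continuous_hermiteFunMulti (α : Fin d → ℕ) : Continuous (hermiteFunMulti d α) := by
  unfold hermiteFunMulti
  exact continuous_finsetProd _ fun i _ => (continuous_hermiteFun _).comp (by fun_prop)

lemma abs_hermiteFunMulti_le (α : Fin d → ℕ) (x : EuclideanSpace ℝ (Fin d)) :
    |hermiteFunMulti d α x| ≤ 2 ^ d * hermiteEigenvalue α ^ d := by
  rw [hermiteFunMulti, Finset.abs_prod]
  calc ∏ i, |hermiteFun (α i) (x i)| ≤ ∏ i : Fin d, (2 * ((α i : ℝ) + 1)) :=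
        Finset.prod_le_prod (fun _ _ => abs_nonneg _) fun i _ => abs_hermiteFun_le _ _
    _ = 2 ^ d * ∏ i, ((α i : ℝ) + 1) := by simp [Finset.prod_mul_distrib]
    _ ≤ 2 ^ d * hermiteEigenvalue α ^ d := by
        gcongr; exact prod_add_one_le_hermiteEigenvalue_pow α

lemma integrable_hermiteFunMulti (α : Fin d → ℕ) : Integrable (hermiteFunMulti d α) :=
  integrable_prod_apply fun i => integrable_hermiteFun (α i)

lemma integrable_mul_hermiteFunMulti {f : EuclideanSpace ℝ (Fin d) → ℝ}
    (hf : Integrable f) (α : Fin d → ℕ) : Integrable fun x => f x * hermiteFunMulti d α x :=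
  hf.mul_bdd (continuous_hermiteFunMulti α).aestronglyMeasurable
    (.of_forall (abs_hermiteFunMulti_le α))

lemma integral_hermiteFunMulti_mul_hermiteFunMulti (α β : Fin d → ℕ) :
    ∫ x, hermiteFunMulti d α x * hermiteFunMulti d β x = if α = β then 1 else 0 := by
  simp only [hermiteFunMulti, ← Finset.prod_mul_distrib]
  rw [integral_prod_apply fun i t => hermiteFun (α i) t * hermiteFun (β i) t]
  simp only [integral_hermiteFun_mul_hermiteFun, Finset.prod_ite_zero, Finset.mem_univ,
    forall_const, Finset.prod_const_one, ← funext_iff]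

lemma hermiteFunMulti_eq_mul_prod_erase {α β : Fin d → ℕ} {i : Fin d} (h : ∀ j ≠ i, β j = α j)
    (x : EuclideanSpace ℝ (Fin d)) : hermiteFunMulti d β x =
      hermiteFun (β i) (x i) * ∏ j ∈ Finset.univ.erase i, hermiteFun (α j) (x j) := by
  rw [hermiteFunMulti, ← Finset.mul_prod_erase _ _ (Finset.mem_univ i)]
  exact congrArg _ (Finset.prod_congr rfl fun j hj => by rw [h j (Finset.ne_of_mem_erase hj)])

lemma hermiteFunMulti_sub_single (α : Fin d → ℕ) (i : Fin d) (x : EuclideanSpace ℝ (Fin d)) :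
    hermiteFunMulti d (α - Pi.single i 1) x =
      hermiteFun (α i - 1) (x i) * ∏ j ∈ Finset.univ.erase i, hermiteFun (α j) (x j) := by
  rw [hermiteFunMulti_eq_mul_prod_erase (α := α) (i := i) (fun j hj => by simp [hj]),
    Pi.sub_apply, Pi.single_eq_same]

lemma hermiteFunMulti_add_single (α : Fin d → ℕ) (i : Fin d) (x : EuclideanSpace ℝ (Fin d)) :
    hermiteFunMulti d (α + Pi.single i 1) x =
      hermiteFun (α i + 1) (x i) * ∏ j ∈ Finset.univ.erase i, hermiteFun (α j) (x j) := by
  rw [hermiteFunMulti_eq_mul_prod_erase (α := α) (i := i) (fun j hj => by simp [hj]),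
    Pi.add_apply, Pi.single_eq_same]

lemma apply_mul_hermiteFunMulti (α : Fin d → ℕ) (i : Fin d) (x : EuclideanSpace ℝ (Fin d)) :
    x i * hermiteFunMulti d α x = √(α i) * hermiteFunMulti d (α - Pi.single i 1) x +
      √(α i + 1) * hermiteFunMulti d (α + Pi.single i 1) x := by
  rw [hermiteFunMulti_sub_single, hermiteFunMulti_add_single,
    hermiteFunMulti_eq_mul_prod_erase (fun _ _ => rfl), ← mul_assoc, mul_hermiteFun]
  ring

lemma hasLineDerivAt_hermiteFunMulti (α : Fin d → ℕ) (i : Fin d)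
    (x : EuclideanSpace ℝ (Fin d)) :
    HasLineDerivAt ℝ (hermiteFunMulti d α)
      (√(α i) / 2 * hermiteFunMulti d (α - Pi.single i 1) x -
        √(α i + 1) / 2 * hermiteFunMulti d (α + Pi.single i 1) x) x
      (EuclideanSpace.single i 1) := by
  have hline : (fun t : ℝ => hermiteFunMulti d α (x + t • EuclideanSpace.single i 1)) =
      fun t => hermiteFun (α i) (x i + t) *
        ∏ j ∈ Finset.univ.erase i, hermiteFun (α j) (x j) := by
    funext t
    rw [hermiteFunMulti_eq_mul_prod_erase (α := α) (i := i) fun _ _ => rfl]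
    congr 1
    · simp
    · exact Finset.prod_congr rfl fun j hj => by simp [Finset.ne_of_mem_erase hj]
  have hderiv := (hasDerivAt_hermiteFun (α i) (x i + 0)).comp_const_add (x i) 0
  rw [HasLineDerivAt, hline, hermiteFunMulti_sub_single, hermiteFunMulti_add_single]
  exact (hderiv.mul_const _).congr_deriv (by rw [add_zero]; ring)

/-! ### Completeness -/

lemma hermiteFunMulti_zero (x : EuclideanSpace ℝ (Fin d)) :
    hermiteFunMulti d 0 x = hermiteConst 0 ^ d * Real.exp (-(‖x‖ ^ 2 / 4)) := by
  simp [hermiteFunMulti, hermiteFun_eq_aeval, Finset.prod_mul_distrib, ← Real.exp_sum,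
    EuclideanSpace.norm_sq_eq, Finset.sum_div]

lemma inner_mul_hermiteFunMulti (α : Fin d → ℕ) (x ξ : EuclideanSpace ℝ (Fin d)) :
    inner ℝ x ξ * hermiteFunMulti d α x =
      ∑ i, (ξ i * √(α i) * hermiteFunMulti d (α - Pi.single i 1) x +
        ξ i * √(α i + 1) * hermiteFunMulti d (α + Pi.single i 1) x) := by
  rw [PiLp.inner_apply, Finset.sum_mul]
  refine Finset.sum_congr rfl fun i _ => ?_
  rw [RCLike.inner_apply, conj_trivial, mul_assoc, apply_mul_hermiteFunMulti]
  ring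

lemma integral_mul_inner_pow_mul_hermiteFunMulti {g : EuclideanSpace ℝ (Fin d) → ℝ}
    (hg : ∀ α, Integrable fun x => g x * hermiteFunMulti d α x)
    (hzero : ∀ α, hermCoeff d g α = 0) (ξ : EuclideanSpace ℝ (Fin d)) (k : ℕ) (α : Fin d → ℕ) :
    (Integrable fun x => g x * inner ℝ x ξ ^ k * hermiteFunMulti d α x) ∧
      ∫ x, g x * inner ℝ x ξ ^ k * hermiteFunMulti d α x = 0 := by
  induction k generalizing α with
  | zero => simpa using ⟨hg α, hzero α⟩
  | succ k ih =>
    have hrec : ∀ x, g x * inner ℝ x ξ ^ (k + 1) * hermiteFunMulti d α x = ∑ i,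
        (ξ i * √(α i) * (g x * inner ℝ x ξ ^ k * hermiteFunMulti d (α - Pi.single i 1) x) +
          ξ i * √(α i + 1) *
            (g x * inner ℝ x ξ ^ k * hermiteFunMulti d (α + Pi.single i 1) x)) := fun x => by
      rw [pow_succ, ← mul_assoc, mul_assoc _ (inner ℝ x ξ), inner_mul_hermiteFunMulti,
        Finset.mul_sum]
      exact Finset.sum_congr rfl fun i _ => by ring
    have hleft := fun i => (ih (α - Pi.single i 1)).1.const_mul (ξ i * √(α i))
    have hright := fun i => (ih (α + Pi.single i 1)).1.const_mul (ξ i * √(α i + 1))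
    simp only [hrec]
    refine ⟨integrable_finsetSum _ fun i _ => (hleft i).add (hright i), ?_⟩
    refine (integral_finsetSum _ fun i _ => (hleft i).add (hright i)).trans ?_
    simp only [Pi.add_apply]
    refine Finset.sum_eq_zero fun i _ => ?_
    rw [integral_add (hleft i) (hright i), integral_const_mul, integral_const_mul, (ih _).2,
      (ih _).2, mul_zero, mul_zero, add_zero]

theorem eq_zero_of_hermCoeff_eq_zero {g : EuclideanSpace ℝ (Fin d) → ℝ} (hg : Continuous g)
    {C : ℝ} (hC : ∀ x, |g x| ≤ C) (hzero : ∀ α, hermCoeff d g α = 0) : g = 0 := by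
  have hint : ∀ α, Integrable fun x => g x * hermiteFunMulti d α x := fun α =>
    (integrable_hermiteFunMulti α).bdd_mul hg.aestronglyMeasurable (.of_forall hC)
  have hprod : (fun x => ((g x * hermiteFunMulti d 0 x : ℝ) : ℂ)) = 0 := by
    refine eq_zero_of_integral_inner_pow_mul_eq_zero
      (Complex.continuous_ofReal.comp (hg.mul (continuous_hermiteFunMulti 0))) (fun c => ?_)
      fun k ξ => ?_
    · have hgauss := ((integrable_exp_mul_norm_mul_exp_neg_sq c).const_mul
        (hermiteConst 0 ^ d)).bdd_mul hg.aestronglyMeasurable (.of_forall hC)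
      have hreal : Integrable fun x => Real.exp (c * ‖x‖) * (g x * hermiteFunMulti d 0 x) :=
        hgauss.congr (.of_forall fun x => by simp only [hermiteFunMulti_zero]; ring)
      exact (hreal.ofReal (𝕜 := ℂ)).congr (.of_forall fun x => Complex.ofReal_mul _ _)
    · have hmoment := (integral_mul_inner_pow_mul_hermiteFunMulti hint hzero ξ k 0).2
      rw [← Complex.ofReal_zero, ← hmoment, ← integral_complex_ofReal]
      exact integral_congr_ae (.of_forall fun x => by push_cast; ring)
  funext x
  have hx : g x * hermiteFunMulti d 0 x = 0 := Complex.ofReal_eq_zero.1 (congrFun hprod x)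
  have hpos : 0 < hermiteFunMulti d 0 x := by
    rw [hermiteFunMulti_zero]
    exact mul_pos (pow_pos (hermiteConst_pos 0) d) (Real.exp_pos _)
  exact (mul_eq_zero.1 hx).resolve_right hpos.ne'

/-! ### The Hermite operator -/

/-- Multiplication by the `i`-th coordinate, as an operator on Schwartz functions. -/
noncomputable def coordMul (i : Fin d) :
    𝓢(EuclideanSpace ℝ (Fin d), ℝ) →L[ℝ] 𝓢(EuclideanSpace ℝ (Fin d), ℝ) :=
  smulLeftCLM ℝ fun x => x i

/-- The `i`-th partial derivative, as an operator on Schwartz functions. -/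
noncomputable def partialDeriv (i : Fin d) :
    𝓢(EuclideanSpace ℝ (Fin d), ℝ) →L[ℝ] 𝓢(EuclideanSpace ℝ (Fin d), ℝ) :=
  lineDerivOpCLM ℝ 𝓢(EuclideanSpace ℝ (Fin d), ℝ) (EuclideanSpace.single i (1 : ℝ))

/-- The pointwise product of real-valued Schwartz functions. -/
noncomputable def schwartzMul : 𝓢(EuclideanSpace ℝ (Fin d), ℝ) →ₗ[ℝ]
    𝓢(EuclideanSpace ℝ (Fin d), ℝ) →L[ℝ] 𝓢(EuclideanSpace ℝ (Fin d), ℝ) :=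
  pairing (ContinuousLinearMap.mul ℝ ℝ)

/-- The Hermite operator `|x|²/2 - 2Δ` on Schwartz functions, normalized so that the Hermite
function of index `α` is an eigenfunction with eigenvalue `2|α| + d`. -/
noncomputable def hermiteOperator :
    𝓢(EuclideanSpace ℝ (Fin d), ℝ) →L[ℝ] 𝓢(EuclideanSpace ℝ (Fin d), ℝ) :=
  ∑ i, ((1 / 2 : ℝ) • coordMul i ∘L coordMul i - (2 : ℝ) • partialDeriv i ∘L partialDeriv i)

/-- The Hermite coefficient of index `α` as a linear functional on Schwartz functions. -/
noncomputable def hermCoeffLinear (α : Fin d → ℕ) : 𝓢(EuclideanSpace ℝ (Fin d), ℝ) →ₗ[ℝ] ℝ where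
  toFun φ := hermCoeff d φ α
  map_add' φ ψ := by
    simp only [hermCoeff, add_apply, add_mul]
    exact integral_add (integrable_mul_hermiteFunMulti φ.integrable α)
      (integrable_mul_hermiteFunMulti ψ.integrable α)
  map_smul' c φ := by
    simp only [hermCoeff, smul_apply, smul_eq_mul, mul_assoc, RingHom.id_apply]
    exact integral_const_mul c _

lemma coordMul_apply (i : Fin d) (φ : 𝓢(EuclideanSpace ℝ (Fin d), ℝ))
    (x : EuclideanSpace ℝ (Fin d)) : coordMul i φ x = x i * φ x :=
  smulLeftCLM_apply_apply
    (EuclideanSpace.proj i : EuclideanSpace ℝ (Fin d) →L[ℝ] ℝ).hasTemperateGrowth φ x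

lemma hasLineDerivAt_partialDeriv (i : Fin d) (φ : 𝓢(EuclideanSpace ℝ (Fin d), ℝ))
    (x : EuclideanSpace ℝ (Fin d)) :
    HasLineDerivAt ℝ φ (partialDeriv i φ x) x (EuclideanSpace.single i 1) :=
  φ.differentiableAt.hasFDerivAt.hasLineDerivAt _

lemma schwartzMul_apply (φ ψ : 𝓢(EuclideanSpace ℝ (Fin d), ℝ)) (x : EuclideanSpace ℝ (Fin d)) :
    schwartzMul φ ψ x = φ x * ψ x :=
  rfl

lemma partialDeriv_schwartzMul (i : Fin d) (φ ψ : 𝓢(EuclideanSpace ℝ (Fin d), ℝ)) :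
    partialDeriv i (schwartzMul φ ψ) =
      schwartzMul (partialDeriv i φ) ψ + schwartzMul φ (partialDeriv i ψ) := by
  ext x
  have hproduct := (hasLineDerivAt_partialDeriv i φ x).mul (hasLineDerivAt_partialDeriv i ψ x)
  rw [(hasLineDerivAt_partialDeriv i (schwartzMul φ ψ) x).unique hproduct]
  simp [schwartzMul_apply]

lemma hermiteOperator_apply (φ : 𝓢(EuclideanSpace ℝ (Fin d), ℝ)) :
    hermiteOperator φ = ∑ i, ((1 / 2 : ℝ) • coordMul i (coordMul i φ) -
      (2 : ℝ) • partialDeriv i (partialDeriv i φ)) := by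
  simp [hermiteOperator]

lemma hermiteOperator_schwartzMul (φ ψ : 𝓢(EuclideanSpace ℝ (Fin d), ℝ)) :
    hermiteOperator (schwartzMul φ ψ) = schwartzMul (hermiteOperator φ) ψ -
      ∑ i, ((4 : ℝ) • schwartzMul (partialDeriv i φ) (partialDeriv i ψ) +
        (2 : ℝ) • schwartzMul φ (partialDeriv i (partialDeriv i ψ))) := by
  ext x
  simp only [hermiteOperator_apply, partialDeriv_schwartzMul, map_add, schwartzMul_apply,
    coordMul_apply, sum_apply, sub_apply, add_apply, smul_apply, smul_eq_mul, Finset.sum_mul,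
    ← Finset.sum_sub_distrib]
  exact Finset.sum_congr rfl fun i _ => by ring

lemma hermCoeffLinear_coordMul (i : Fin d) (φ : 𝓢(EuclideanSpace ℝ (Fin d), ℝ))
    (α : Fin d → ℕ) : hermCoeffLinear α (coordMul i φ) =
      √(α i) * hermCoeffLinear (α - Pi.single i 1) φ +
        √(α i + 1) * hermCoeffLinear (α + Pi.single i 1) φ := by
  have hrec : ∀ x, coordMul i φ x * hermiteFunMulti d α x =
      √(α i) * (φ x * hermiteFunMulti d (α - Pi.single i 1) x) +
        √(α i + 1) * (φ x * hermiteFunMulti d (α + Pi.single i 1) x) := fun x => by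
    rw [coordMul_apply]
    linear_combination φ x * apply_mul_hermiteFunMulti α i x
  simp only [hermCoeffLinear, LinearMap.coe_mk, AddHom.coe_mk, hermCoeff, hrec]
  rw [integral_add ((integrable_mul_hermiteFunMulti φ.integrable _).const_mul _)
    ((integrable_mul_hermiteFunMulti φ.integrable _).const_mul _), integral_const_mul,
    integral_const_mul]

lemma hermCoeffLinear_partialDeriv (i : Fin d) (φ : 𝓢(EuclideanSpace ℝ (Fin d), ℝ))
    (α : Fin d → ℕ) : hermCoeffLinear α (partialDeriv i φ) =
      √(α i + 1) / 2 * hermCoeffLinear (α + Pi.single i 1) φ -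
        √(α i) / 2 * hermCoeffLinear (α - Pi.single i 1) φ := by
  have hint := fun β => integrable_mul_hermiteFunMulti φ.integrable β
  have hsplit : ∀ x, φ x * (√(α i) / 2 * hermiteFunMulti d (α - Pi.single i 1) x -
      √(α i + 1) / 2 * hermiteFunMulti d (α + Pi.single i 1) x) =
        √(α i) / 2 * (φ x * hermiteFunMulti d (α - Pi.single i 1) x) -
          √(α i + 1) / 2 * (φ x * hermiteFunMulti d (α + Pi.single i 1) x) := fun x => by ring
  have hparts := integral_bilinear_hasLineDerivAt_right_eq_neg_left_of_integrable
    (μ := volume) (B := ContinuousLinearMap.mul ℝ ℝ) (f := φ) (g := hermiteFunMulti d α)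
    (integrable_mul_hermiteFunMulti (partialDeriv i φ).integrable α)
    (by
      simp only [ContinuousLinearMap.mul_apply', hsplit]
      exact ((hint _).const_mul _).sub ((hint _).const_mul _))
    (hint α) (fun x _ => hasLineDerivAt_partialDeriv i φ x)
    (fun x _ => hasLineDerivAt_hermiteFunMulti α i x)
  simp only [ContinuousLinearMap.mul_apply', hsplit] at hparts
  rw [integral_sub ((hint _).const_mul _) ((hint _).const_mul _), integral_const_mul,
    integral_const_mul] at hparts
  simp only [hermCoeffLinear, LinearMap.coe_mk, AddHom.coe_mk, hermCoeff]
  linarith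

lemma sqrt_mul_sqrt_mul_sub_single_add_single (F : (Fin d → ℕ) → ℝ) (α : Fin d → ℕ) (i : Fin d) :
    √(α i) * (√((α i - 1 : ℕ) + 1) * F (α - Pi.single i 1 + Pi.single i 1)) = α i * F α := by
  rcases Nat.eq_zero_or_pos (α i) with hzero | hpos
  · simp [hzero]
  · have hindex : α - Pi.single i 1 + Pi.single i 1 = α :=
      tsub_add_cancel_of_le fun j => by
        rcases eq_or_ne j i with rfl | hne
        · rwa [Pi.single_eq_same]
        · simp [hne]
    rw [hindex, ← Nat.cast_add_one, Nat.sub_add_cancel hpos, ← mul_assoc,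
      Real.mul_self_sqrt (Nat.cast_nonneg _)]

theorem hermCoeffLinear_hermiteOperator (φ : 𝓢(EuclideanSpace ℝ (Fin d), ℝ)) (α : Fin d → ℕ) :
    hermCoeffLinear α (hermiteOperator φ) = hermiteEigenvalue α * hermCoeffLinear α φ := by
  rw [hermiteOperator_apply, map_sum, hermiteEigenvalue_eq_sum, Finset.sum_mul]
  refine Finset.sum_congr rfl fun i _ => ?_
  have hdown_up := sqrt_mul_sqrt_mul_sub_single_add_single (hermCoeffLinear · φ) α i
  have hsqrt := Real.mul_self_sqrt (show (0 : ℝ) ≤ α i + 1 by positivity)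
  simp only [map_sub, map_smul, smul_eq_mul, hermCoeffLinear_coordMul,
    hermCoeffLinear_partialDeriv, Pi.sub_apply, Pi.add_apply, Pi.single_eq_same,
    add_tsub_cancel_right, Nat.cast_add, Nat.cast_one]
  linear_combination hdown_up + hermCoeffLinear α φ * hsqrt

lemma hermCoeffLinear_iterate_hermiteOperator (k : ℕ) (φ : 𝓢(EuclideanSpace ℝ (Fin d), ℝ))
    (α : Fin d → ℕ) : hermCoeffLinear α (hermiteOperator^[k] φ) =
      hermiteEigenvalue α ^ k * hermCoeffLinear α φ := by
  induction k with
  | zero => simp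
  | succ k ih =>
    rw [Function.iterate_succ_apply', hermCoeffLinear_hermiteOperator, ih, pow_succ']
    ring

/-! ### Hermite norms -/

lemma memLp_two_hermiteFunMulti (α : Fin d → ℕ) : MemLp (hermiteFunMulti d α) 2 := by
  refine (memLp_two_iff_integrable_sq (continuous_hermiteFunMulti α).aestronglyMeasurable).2 ?_
  simpa only [sq] using integrable_mul_hermiteFunMulti (integrable_hermiteFunMulti α) α

theorem hermCoeff_sq_le_integral_sq {f : EuclideanSpace ℝ (Fin d) → ℝ} (hf : MemLp f 2)
    (α : Fin d → ℕ) : hermCoeff d f α ^ 2 ≤ ∫ x, f x ^ 2 := by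
  set c := hermCoeff d f α
  have hprojection : ∫ x, (f x - c * hermiteFunMulti d α x) ^ 2 = (∫ x, f x ^ 2) - c ^ 2 := by
    have hnormalized : ∫ x, hermiteFunMulti d α x ^ 2 = 1 := by
      simp only [sq, integral_hermiteFunMulti_mul_hermiteFunMulti, if_true]
    have hcross : Integrable fun x => f x * hermiteFunMulti d α x :=
      hf.integrable_mul (memLp_two_hermiteFunMulti α)
    have hsquare := (memLp_two_hermiteFunMulti α).integrable_sq.const_mul (c ^ 2)
    have hdifference : Integrable fun x =>
        f x ^ 2 - 2 * c * (f x * hermiteFunMulti d α x) :=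
      hf.integrable_sq.sub (hcross.const_mul _)
    have hexpand : ∀ x, (f x - c * hermiteFunMulti d α x) ^ 2 =
        f x ^ 2 - 2 * c * (f x * hermiteFunMulti d α x) + c ^ 2 * hermiteFunMulti d α x ^ 2 :=
      fun x => by ring
    simp only [hexpand]
    rw [integral_add hdifference hsquare, integral_sub hf.integrable_sq (hcross.const_mul _),
      integral_const_mul, integral_const_mul, hnormalized]
    change _ - 2 * c * c + _ = _
    ring
  have := hprojection ▸ integral_nonneg fun x => sq_nonneg (f x - c * hermiteFunMulti d α x)
  linarith

lemma exists_hermiteEigenvalue_pow_mul_abs_hermCoeff_le (k : ℕ)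
    (φ : 𝓢(EuclideanSpace ℝ (Fin d), ℝ)) :
    ∃ M, ∀ α, hermiteEigenvalue α ^ k * |hermCoeff d φ α| ≤ M := by
  refine ⟨√(∫ x, hermiteOperator^[k] φ x ^ 2), fun α => ?_⟩
  have hcoeff : hermCoeff d (hermiteOperator^[k] φ) α = _ :=
    hermCoeffLinear_iterate_hermiteOperator k φ α
  have hbessel := Real.abs_le_sqrt
    (hermCoeff_sq_le_integral_sq ((hermiteOperator^[k] φ).memLp 2 volume) α)
  rwa [hcoeff, abs_mul, abs_of_nonneg (pow_nonneg (hermiteEigenvalue_nonneg α) k)] at hbessel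

lemma hermNorm_nonneg (n : ℕ) (f : EuclideanSpace ℝ (Fin d) → ℝ) : 0 ≤ hermNorm d n f :=
  Real.sqrt_nonneg _

lemma hermNorm_eq_sqrt_tsum_sq (n : ℕ) (f : EuclideanSpace ℝ (Fin d) → ℝ) :
    hermNorm d n f = √(∑' α, (hermiteEigenvalue α ^ n * hermCoeff d f α) ^ 2) := by
  simp only [hermNorm, hermiteEigenvalue, mul_pow, pow_mul']

lemma hermiteEigenvalue_pow_mul_sq_le {α : Fin d → ℕ} {n : ℕ} {a M : ℝ}
    (h : hermiteEigenvalue α ^ (n + d) * |a| ≤ M) :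
    (hermiteEigenvalue α ^ n * a) ^ 2 ≤ (hermiteEigenvalue α ^ d)⁻¹ ^ 2 * M ^ 2 := by
  have hpos := hermiteEigenvalue_pow_pos α
  have hnonneg := hermiteEigenvalue_nonneg α
  rw [← mul_pow, ← sq_abs, abs_mul, abs_of_nonneg (pow_nonneg hnonneg n)]
  refine pow_le_pow_left₀ (by positivity) ?_ 2
  rw [inv_mul_eq_div, le_div_iff₀ hpos]
  linarith [pow_add (hermiteEigenvalue α) n d ▸ h]

lemma summable_hermiteEigenvalue_pow_mul_hermCoeff_sq (n : ℕ)
    (φ : 𝓢(EuclideanSpace ℝ (Fin d), ℝ)) :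
    Summable fun α => (hermiteEigenvalue α ^ n * hermCoeff d φ α) ^ 2 := by
  obtain ⟨M, hM⟩ := exists_hermiteEigenvalue_pow_mul_abs_hermCoeff_le (n + d) φ
  exact ((summable_hermiteEigenvalue_pow_inv_sq d).mul_right (M ^ 2)).of_nonneg_of_le
    (fun α => sq_nonneg _) fun α => hermiteEigenvalue_pow_mul_sq_le (hM α)

lemma hermNorm_le_of_hermiteEigenvalue_pow_mul_abs_hermCoeff_le {n : ℕ} {M : ℝ}
    {f : EuclideanSpace ℝ (Fin d) → ℝ}
    (h : ∀ α, hermiteEigenvalue α ^ (n + d) * |hermCoeff d f α| ≤ M) :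
    hermNorm d n f ≤ √(hermiteSum d) * M := by
  have hM : 0 ≤ M := le_trans
    (mul_nonneg (pow_nonneg (hermiteEigenvalue_nonneg 0) _) (abs_nonneg _)) (h 0)
  have hsummable := (summable_hermiteEigenvalue_pow_inv_sq d).mul_right (M ^ 2)
  have hle := fun α => hermiteEigenvalue_pow_mul_sq_le (h α)
  rw [hermNorm_eq_sqrt_tsum_sq, ← Real.sqrt_sq hM, ← Real.sqrt_mul (hermiteSum_nonneg d),
    hermiteSum, ← tsum_mul_right]
  exact Real.sqrt_le_sqrt
    ((hsummable.of_nonneg_of_le (fun α => sq_nonneg _) hle).tsum_le_tsum hle hsummable)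

lemma hermiteEigenvalue_pow_mul_abs_hermCoeff_le_hermNorm (n : ℕ)
    (φ : 𝓢(EuclideanSpace ℝ (Fin d), ℝ)) (α : Fin d → ℕ) :
    hermiteEigenvalue α ^ n * |hermCoeff d φ α| ≤ hermNorm d n φ := by
  rw [← abs_of_nonneg (pow_nonneg (hermiteEigenvalue_nonneg α) n), ← abs_mul,
    hermNorm_eq_sqrt_tsum_sq]
  exact Real.abs_le_sqrt
    ((summable_hermiteEigenvalue_pow_mul_hermCoeff_sq n φ).le_tsum α fun β _ => sq_nonneg _)

lemma hermNorm_mono (hd : 0 < d) {m n : ℕ} (hmn : m ≤ n) (φ : 𝓢(EuclideanSpace ℝ (Fin d), ℝ)) :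
    hermNorm d m φ ≤ hermNorm d n φ := by
  simp only [hermNorm_eq_sqrt_tsum_sq]
  refine Real.sqrt_le_sqrt ((summable_hermiteEigenvalue_pow_mul_hermCoeff_sq m φ).tsum_le_tsum
    (fun α => ?_) (summable_hermiteEigenvalue_pow_mul_hermCoeff_sq n φ))
  have hone := one_le_hermiteEigenvalue hd α
  rw [mul_pow, mul_pow]
  gcongr

lemma hermNorm_hermiteOperator (n : ℕ) (φ : 𝓢(EuclideanSpace ℝ (Fin d), ℝ)) :
    hermNorm d n (hermiteOperator φ) = hermNorm d (n + 1) φ := by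
  have hcoeff : ∀ α, hermCoeff d (hermiteOperator φ) α = _ := hermCoeffLinear_hermiteOperator φ
  simp only [hermNorm_eq_sqrt_tsum_sq, hcoeff, pow_succ, mul_assoc]
  rfl

lemma abs_hermCoeff_partialDeriv_le (i : Fin d)
    (φ : 𝓢(EuclideanSpace ℝ (Fin d), ℝ)) (α : Fin d → ℕ) :
    |hermCoeff d (partialDeriv i φ) α| ≤ hermiteEigenvalue α / 2 *
      (|hermCoeff d φ (α + Pi.single i 1)| + |hermCoeff d φ (α - Pi.single i 1)|) := by
  have hcoeff : hermCoeff d (partialDeriv i φ) α =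
      √(α i + 1) / 2 * hermCoeff d φ (α + Pi.single i 1) -
        √(α i) / 2 * hermCoeff d φ (α - Pi.single i 1) := hermCoeffLinear_partialDeriv i φ α
  have hup : √(α i + 1 : ℝ) ≤ hermiteEigenvalue α := sqrt_add_one_le_hermiteEigenvalue α i
  have hdown : √(α i : ℝ) ≤ hermiteEigenvalue α :=
    (Real.sqrt_le_sqrt (le_add_of_nonneg_right zero_le_one)).trans hup
  rw [hcoeff, mul_add]
  refine (abs_sub _ _).trans (add_le_add ?_ ?_)
  · rw [abs_mul, abs_of_nonneg (by positivity)]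
    gcongr
  · rw [abs_mul, abs_of_nonneg (by positivity)]
    gcongr

theorem hermNorm_partialDeriv_le (n : ℕ) (i : Fin d) (φ : 𝓢(EuclideanSpace ℝ (Fin d), ℝ)) :
    hermNorm d n (partialDeriv i φ) ≤
      √(hermiteSum d) * (3 ^ (n + d + 1) * hermNorm d (n + d + 1) φ) := by
  refine hermNorm_le_of_hermiteEigenvalue_pow_mul_abs_hermCoeff_le fun α => ?_
  have hshift : ∀ β, hermiteEigenvalue α ≤ 3 * hermiteEigenvalue β →
      hermiteEigenvalue α ^ (n + d + 1) * |hermCoeff d φ β| ≤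
        3 ^ (n + d + 1) * hermNorm d (n + d + 1) φ := fun β hβ => by
    have := hermiteEigenvalue_nonneg α
    calc hermiteEigenvalue α ^ (n + d + 1) * |hermCoeff d φ β|
        ≤ (3 * hermiteEigenvalue β) ^ (n + d + 1) * |hermCoeff d φ β| := by gcongr
      _ = 3 ^ (n + d + 1) * (hermiteEigenvalue β ^ (n + d + 1) * |hermCoeff d φ β|) := by ring
      _ ≤ 3 ^ (n + d + 1) * hermNorm d (n + d + 1) φ := by
          gcongr; exact hermiteEigenvalue_pow_mul_abs_hermCoeff_le_hermNorm _ φ β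
  have hup := hshift (α + Pi.single i 1) <|
    (hermiteEigenvalue_mono (le_add_of_nonneg_right zero_le)).trans
      (le_mul_of_one_le_left (hermiteEigenvalue_nonneg _) (by norm_num))
  have hdown := hshift (α - Pi.single i 1) <|
    (hermiteEigenvalue_mono le_tsub_add).trans (hermiteEigenvalue_add_single_le _ i)
  have hcoeff := mul_le_mul_of_nonneg_left (abs_hermCoeff_partialDeriv_le i φ α)
    (pow_nonneg (hermiteEigenvalue_nonneg α) (n + d))
  rw [pow_succ] at hup hdown
  linarith

lemma hermiteEigenvalue_pow_mul_abs_hermCoeff_le_mul_inv_sq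
    (φ : 𝓢(EuclideanSpace ℝ (Fin d), ℝ)) (α : Fin d → ℕ) :
    hermiteEigenvalue α ^ d * |hermCoeff d φ α| ≤
      (hermiteEigenvalue α ^ d)⁻¹ ^ 2 * hermNorm d (3 * d) φ := by
  have hpos := hermiteEigenvalue_pow_pos α
  have hle := hermiteEigenvalue_pow_mul_abs_hermCoeff_le_hermNorm (3 * d) φ α
  rw [inv_pow, inv_mul_eq_div, le_div_iff₀ (by positivity)]
  calc _ = hermiteEigenvalue α ^ (3 * d) * |hermCoeff d φ α| := by ring
    _ ≤ _ := hle

lemma summable_hermiteEigenvalue_pow_mul_abs_hermCoeff (φ : 𝓢(EuclideanSpace ℝ (Fin d), ℝ)) :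
    Summable fun α => hermiteEigenvalue α ^ d * |hermCoeff d φ α| :=
  ((summable_hermiteEigenvalue_pow_inv_sq d).mul_right _).of_nonneg_of_le
    (fun α => mul_nonneg (hermiteEigenvalue_pow_pos α).le (abs_nonneg _))
    (hermiteEigenvalue_pow_mul_abs_hermCoeff_le_mul_inv_sq φ)

lemma tsum_hermiteEigenvalue_pow_mul_abs_hermCoeff_le (φ : 𝓢(EuclideanSpace ℝ (Fin d), ℝ)) :
    ∑' α, hermiteEigenvalue α ^ d * |hermCoeff d φ α| ≤ hermiteSum d * hermNorm d (3 * d) φ := by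
  rw [hermiteSum, ← tsum_mul_right]
  exact (summable_hermiteEigenvalue_pow_mul_abs_hermCoeff φ).tsum_le_tsum
    (hermiteEigenvalue_pow_mul_abs_hermCoeff_le_mul_inv_sq φ)
    ((summable_hermiteEigenvalue_pow_inv_sq d).mul_right _)

/-! ### Hermite expansions -/

/-- The Hermite series `∑_α a_α h_α` with coefficient family `a`. -/
noncomputable def hermiteSeries (a : (Fin d → ℕ) → ℝ) (x : EuclideanSpace ℝ (Fin d)) : ℝ :=
  ∑' α, a α * hermiteFunMulti d α x

lemma abs_mul_hermiteFunMulti_le (c : ℝ) (α : Fin d → ℕ) (x : EuclideanSpace ℝ (Fin d)) :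
    |c * hermiteFunMulti d α x| ≤ 2 ^ d * (hermiteEigenvalue α ^ d * |c|) := by
  rw [abs_mul]
  nlinarith [mul_le_mul_of_nonneg_left (abs_hermiteFunMulti_le α x) (abs_nonneg c)]

variable {a : (Fin d → ℕ) → ℝ}

lemma continuous_hermiteSeries (ha : Summable fun α => hermiteEigenvalue α ^ d * |a α|) :
    Continuous (hermiteSeries a) :=
  continuous_tsum (fun α => (continuous_hermiteFunMulti α).const_mul (a α)) (ha.mul_left (2 ^ d))
    fun α x => abs_mul_hermiteFunMulti_le (a α) α x

lemma abs_hermiteSeries_le (ha : Summable fun α => hermiteEigenvalue α ^ d * |a α|)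
    (x : EuclideanSpace ℝ (Fin d)) :
    |hermiteSeries a x| ≤ 2 ^ d * ∑' α, hermiteEigenvalue α ^ d * |a α| := by
  rw [← tsum_mul_left]
  exact tsum_of_norm_bounded (f := fun α => a α * hermiteFunMulti d α x)
    (ha.mul_left (2 ^ d)).hasSum fun α => abs_mul_hermiteFunMulti_le (a α) α x

lemma hasSum_integral_mul_hermiteSeries
    (ha : Summable fun α => hermiteEigenvalue α ^ d * |a α|)
    {f : EuclideanSpace ℝ (Fin d) → ℝ} (hf : Integrable f) :
    HasSum (fun α => a α * hermCoeff d f α) (∫ x, f x * hermiteSeries a x) := by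
  have hbound := fun α x => abs_mul_hermiteFunMulti_le (a α) α x
  have hsummable := ha.mul_left (2 ^ d)
  have hcoeff : ∀ α, a α * hermCoeff d f α = ∫ x, f x * (a α * hermiteFunMulti d α x) :=
    fun α => by rw [hermCoeff, ← integral_const_mul]; congr with x; ring
  simp only [hcoeff]
  refine hasSum_integral_of_dominated_convergence
    (fun α x => |f x| * (2 ^ d * (hermiteEigenvalue α ^ d * |a α|)))
    (fun α => hf.aestronglyMeasurable.mul
      ((continuous_hermiteFunMulti α).const_mul (a α)).aestronglyMeasurable)
    (fun α => .of_forall fun x => ?_) (.of_forall fun x => hsummable.mul_left _) ?_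
    (.of_forall fun x => ?_)
  · rw [norm_mul]
    exact mul_le_mul_of_nonneg_left (hbound α x) (norm_nonneg _)
  · simp only [tsum_mul_left]
    exact hf.abs.mul_const _
  · exact (hsummable.of_norm_bounded (hbound · x)).hasSum.mul_left (f x)

lemma hermCoeff_hermiteSeries (ha : Summable fun α => hermiteEigenvalue α ^ d * |a α|)
    (β : Fin d → ℕ) : hermCoeff d (hermiteSeries a) β = a β := by
  have hsum := hasSum_integral_mul_hermiteSeries ha (integrable_hermiteFunMulti β)
  have hcoeff : ∀ α, a α * hermCoeff d (hermiteFunMulti d β) α = if α = β then a β else 0 :=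
    fun α => by
      rcases eq_or_ne α β with rfl | hne
      · simp [hermCoeff, integral_hermiteFunMulti_mul_hermiteFunMulti]
      · simp [hermCoeff, integral_hermiteFunMulti_mul_hermiteFunMulti, hne, hne.symm]
  simp only [hcoeff, mul_comm (hermiteFunMulti d β _)] at hsum
  exact hsum.unique (hasSum_ite_eq β (a β))

theorem hermiteSeries_hermCoeff (φ : 𝓢(EuclideanSpace ℝ (Fin d), ℝ)) :
    hermiteSeries (hermCoeff d φ) = φ := by
  have hsummable := summable_hermiteEigenvalue_pow_mul_abs_hermCoeff φ
  have hcontinuous := continuous_hermiteSeries hsummable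
  have hbound := abs_hermiteSeries_le hsummable
  refine (sub_eq_zero.1 (eq_zero_of_hermCoeff_eq_zero (φ.continuous.sub hcontinuous)
    (fun x => (abs_sub _ _).trans
      (add_le_add (φ.toBoundedContinuousFunction.norm_coe_le_norm x) (hbound x)))
    fun α => ?_)).symm
  have hintegrable : Integrable fun x =>
      hermiteSeries (hermCoeff d φ) x * hermiteFunMulti d α x :=
    (integrable_hermiteFunMulti α).bdd_mul hcontinuous.aestronglyMeasurable (.of_forall hbound)
  simp only [hermCoeff, Pi.sub_apply, sub_mul]
  rw [integral_sub (integrable_mul_hermiteFunMulti φ.integrable α) hintegrable, sub_eq_zero]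
  exact (hermCoeff_hermiteSeries hsummable α).symm

lemma abs_apply_le_hermNorm (φ : 𝓢(EuclideanSpace ℝ (Fin d), ℝ))
    (x : EuclideanSpace ℝ (Fin d)) :
    |φ x| ≤ 2 ^ d * (hermiteSum d * hermNorm d (3 * d) φ) := by
  have hbound := abs_hermiteSeries_le (summable_hermiteEigenvalue_pow_mul_abs_hermCoeff φ) x
  rw [hermiteSeries_hermCoeff] at hbound
  exact hbound.trans (mul_le_mul_of_nonneg_left
    (tsum_hermiteEigenvalue_pow_mul_abs_hermCoeff_le φ) (by positivity))

theorem integral_sq_eq_hermNorm_sq (φ : 𝓢(EuclideanSpace ℝ (Fin d), ℝ)) :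
    ∫ x, φ x ^ 2 = hermNorm d 0 φ ^ 2 := by
  have hparseval := hasSum_integral_mul_hermiteSeries
    (summable_hermiteEigenvalue_pow_mul_abs_hermCoeff φ) φ.integrable
  rw [hermiteSeries_hermCoeff] at hparseval
  simp only [hermNorm_eq_sqrt_tsum_sq, pow_zero, one_mul]
  rw [Real.sq_sqrt (tsum_nonneg fun α => sq_nonneg _)]
  simpa only [sq] using hparseval.tsum_eq.symm

/-! ### Products -/

lemma abs_hermCoeff_schwartzMul_le (φ ψ : 𝓢(EuclideanSpace ℝ (Fin d), ℝ)) (α : Fin d → ℕ) :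
    |hermCoeff d (schwartzMul φ ψ) α| ≤
      2 ^ d * (hermiteSum d * hermNorm d (3 * d) φ) * hermNorm d 0 ψ := by
  set K := 2 ^ d * (hermiteSum d * hermNorm d (3 * d) φ)
  have hK : 0 ≤ K := (abs_nonneg _).trans (abs_apply_le_hermNorm φ 0)
  refine abs_le_of_sq_le_sq ?_ (mul_nonneg hK (hermNorm_nonneg 0 ψ))
  have hψ := (ψ.memLp 2 volume).integrable_sq.const_mul (K ^ 2)
  calc hermCoeff d (schwartzMul φ ψ) α ^ 2 ≤ ∫ x, schwartzMul φ ψ x ^ 2 :=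
        hermCoeff_sq_le_integral_sq ((schwartzMul φ ψ).memLp 2 volume) α
    _ ≤ ∫ x, K ^ 2 * ψ x ^ 2 := by
        refine integral_mono ((schwartzMul φ ψ).memLp 2 volume).integrable_sq hψ fun x => ?_
        have hφ : φ x ^ 2 ≤ K ^ 2 :=
          sq_le_sq.2 ((abs_apply_le_hermNorm φ x).trans (le_abs_self K))
        simp only [schwartzMul_apply, mul_pow (φ x)]
        gcongr
    _ = (K * hermNorm d 0 ψ) ^ 2 := by
        rw [integral_const_mul, integral_sq_eq_hermNorm_sq, mul_pow K]

lemma hermiteEigenvalue_pow_succ_mul_abs_hermCoeff_schwartzMul_le (n : ℕ)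
    (φ ψ : 𝓢(EuclideanSpace ℝ (Fin d), ℝ)) (α : Fin d → ℕ) :
    hermiteEigenvalue α ^ (n + 1) * |hermCoeff d (schwartzMul φ ψ) α| ≤
      hermiteEigenvalue α ^ n * |hermCoeff d (schwartzMul (hermiteOperator φ) ψ) α| + ∑ i,
        (4 * (hermiteEigenvalue α ^ n *
          |hermCoeff d (schwartzMul (partialDeriv i φ) (partialDeriv i ψ)) α|) +
        2 * (hermiteEigenvalue α ^ n *
          |hermCoeff d (schwartzMul φ (partialDeriv i (partialDeriv i ψ))) α|)) := by
  have hnonneg := hermiteEigenvalue_nonneg α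
  have hleibniz := hermCoeffLinear_hermiteOperator (schwartzMul φ ψ) α
  rw [hermiteOperator_schwartzMul, map_sub, map_sum] at hleibniz
  simp only [map_add, map_smul, smul_eq_mul] at hleibniz
  simp only [pow_succ, mul_left_comm (4 : ℝ), mul_left_comm (2 : ℝ), ← mul_add, ← Finset.mul_sum,
    mul_assoc]
  refine mul_le_mul_of_nonneg_left ?_ (pow_nonneg hnonneg n)
  change hermiteEigenvalue α * |hermCoeffLinear α (schwartzMul φ ψ)| ≤ _
  rw [← abs_of_nonneg hnonneg, ← abs_mul, ← hleibniz]
  refine (abs_sub _ _).trans (add_le_add_right ((Finset.abs_sum_le_sum_abs _ _).trans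
    (Finset.sum_le_sum fun i _ => ?_)) _)
  refine (abs_add_le _ _).trans_eq ?_
  rw [abs_mul, abs_mul, Nat.abs_ofNat, Nat.abs_ofNat]
  rfl

lemma exists_hermNorm_partialDeriv_le (d n : ℕ) : ∃ K, 0 ≤ K ∧
    ∀ (i : Fin d) (φ : 𝓢(EuclideanSpace ℝ (Fin d), ℝ)),
      hermNorm d n (partialDeriv i φ) ≤ K * hermNorm d (n + d + 1) φ :=
  ⟨√(hermiteSum d) * 3 ^ (n + d + 1), by positivity, fun i φ =>
    (hermNorm_partialDeriv_le n i φ).trans_eq (mul_assoc _ _ _).symm⟩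

lemma exists_hermNorm_le_mul_hermNorm (hd : 0 < d) (n : ℕ) :
    ∃ m K, ∀ φ : 𝓢(EuclideanSpace ℝ (Fin d), ℝ),
      hermNorm d n φ ≤ K * hermNorm d m φ ∧
      hermNorm d n (hermiteOperator φ) ≤ K * hermNorm d m φ ∧
      ∀ i, hermNorm d n (partialDeriv i φ) ≤ K * hermNorm d m φ ∧
        hermNorm d n (partialDeriv i (partialDeriv i φ)) ≤ K * hermNorm d m φ := by
  obtain ⟨K₁, hK₁, hfirst⟩ := exists_hermNorm_partialDeriv_le d n
  obtain ⟨K₂, hK₂, hsecond⟩ := exists_hermNorm_partialDeriv_le d (n + d + 1)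
  have hbound : ∀ (φ : 𝓢(EuclideanSpace ℝ (Fin d), ℝ)) {k : ℕ} {c : ℝ},
      k ≤ n + d + 1 + d + 1 → c ≤ (1 + K₁) * (1 + K₂) →
        c * hermNorm d k φ ≤ (1 + K₁) * (1 + K₂) * hermNorm d (n + d + 1 + d + 1) φ :=
    fun φ k c hk hc => mul_le_mul hc (hermNorm_mono hd hk φ) (hermNorm_nonneg _ _) (by positivity)
  have hprod := mul_nonneg hK₁ hK₂
  refine ⟨n + d + 1 + d + 1, (1 + K₁) * (1 + K₂), fun φ => ⟨?_, ?_, fun i => ⟨?_, ?_⟩⟩⟩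
  · exact (one_mul (hermNorm d n φ)).symm.trans_le (hbound φ (by omega) (by linarith))
  · rw [hermNorm_hermiteOperator, ← one_mul (hermNorm d (n + 1) φ)]
    exact hbound φ (by omega) (by linarith)
  · exact (hfirst i φ).trans (hbound φ (by omega) (by linarith))
  · calc hermNorm d n (partialDeriv i (partialDeriv i φ))
        ≤ K₁ * (K₂ * hermNorm d (n + d + 1 + d + 1) φ) :=
          (hfirst i _).trans (mul_le_mul_of_nonneg_left (hsecond i φ) hK₁)
      _ ≤ _ := by
          rw [← mul_assoc]
          exact hbound φ le_rfl (by linarith)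

theorem exists_hermiteEigenvalue_pow_mul_abs_hermCoeff_schwartzMul_le_of_pos (hd : 0 < d)
    (n : ℕ) : ∃ r C, 0 ≤ C ∧ ∀ (φ ψ : 𝓢(EuclideanSpace ℝ (Fin d), ℝ)) (α : Fin d → ℕ),
      hermiteEigenvalue α ^ n * |hermCoeff d (schwartzMul φ ψ) α| ≤
        C * hermNorm d r φ * hermNorm d r ψ := by
  induction n with
  | zero =>
    refine ⟨3 * d, 2 ^ d * hermiteSum d, mul_nonneg (by positivity) (hermiteSum_nonneg d),
      fun φ ψ α => ?_⟩
    rw [pow_zero, one_mul, mul_assoc (2 ^ d)]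
    exact (abs_hermCoeff_schwartzMul_le φ ψ α).trans (mul_le_mul_of_nonneg_left
      (hermNorm_mono hd zero_le ψ) ((abs_nonneg _).trans (abs_apply_le_hermNorm φ 0)))
  | succ n ih =>
    obtain ⟨r, C, hC, hprod⟩ := ih
    obtain ⟨m, K, hnorm⟩ := exists_hermNorm_le_mul_hermNorm hd r
    refine ⟨m, (1 + 6 * d) * C * K ^ 2, by positivity, fun φ ψ α => ?_⟩
    obtain ⟨hφ, hNφ, hφderiv⟩ := hnorm φ
    obtain ⟨hψ, -, hψderiv⟩ := hnorm ψ
    set B := C * (K * hermNorm d m φ) * (K * hermNorm d m ψ) with hB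
    have hbound : ∀ {φ' ψ' : 𝓢(EuclideanSpace ℝ (Fin d), ℝ)},
        hermNorm d r φ' ≤ K * hermNorm d m φ → hermNorm d r ψ' ≤ K * hermNorm d m ψ →
          hermiteEigenvalue α ^ n * |hermCoeff d (schwartzMul φ' ψ') α| ≤ B :=
      fun {φ' ψ'} hφ' hψ' => (hprod φ' ψ' α).trans <|
        mul_le_mul (mul_le_mul_of_nonneg_left hφ' hC) hψ' (hermNorm_nonneg _ _)
          (mul_nonneg hC ((hermNorm_nonneg _ _).trans hφ'))
    calc hermiteEigenvalue α ^ (n + 1) * |hermCoeff d (schwartzMul φ ψ) α|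
        ≤ _ := hermiteEigenvalue_pow_succ_mul_abs_hermCoeff_schwartzMul_le n φ ψ α
      _ ≤ B + ∑ i : Fin d, (4 * B + 2 * B) :=
          add_le_add (hbound hNφ hψ) <| Finset.sum_le_sum fun i _ => add_le_add
            (mul_le_mul_of_nonneg_left (hbound (hφderiv i).1 (hψderiv i).1) (by norm_num))
            (mul_le_mul_of_nonneg_left (hbound hφ (hψderiv i).2) (by norm_num))
      _ = (1 + 6 * d) * C * K ^ 2 * hermNorm d m φ * hermNorm d m ψ := by
          rw [Finset.sum_const, Finset.card_univ, Fintype.card_fin, nsmul_eq_mul, hB]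
          ring

theorem exists_hermiteEigenvalue_pow_mul_abs_hermCoeff_schwartzMul_le (d n : ℕ) :
    ∃ r s C, ∀ (φ ψ : 𝓢(EuclideanSpace ℝ (Fin d), ℝ)) (α : Fin d → ℕ),
      hermiteEigenvalue α ^ n * |hermCoeff d (schwartzMul φ ψ) α| ≤
        C * hermNorm d r φ * hermNorm d s ψ := by
  rcases Nat.eq_zero_or_pos d with rfl | hd
  -- For `d = 0` the only eigenvalue is `0`, so Hermite norms do not increase with their index.
  · refine ⟨0, 0, 2 ^ 0 * hermiteSum 0, fun φ ψ α => ?_⟩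
    have hone : hermiteEigenvalue α ^ n ≤ 1 :=
      pow_le_one₀ (hermiteEigenvalue_nonneg α) (by simp [hermiteEigenvalue])
    rw [mul_assoc (2 ^ 0)]
    exact (mul_le_of_le_one_left (abs_nonneg _) hone).trans (abs_hermCoeff_schwartzMul_le φ ψ α)
  · obtain ⟨r, C, -, hprod⟩ :=
      exists_hermiteEigenvalue_pow_mul_abs_hermCoeff_schwartzMul_le_of_pos hd n
    exact ⟨r, r, C, hprod⟩

end

/-- For every `n` there exist `r, s ∈ ℕ` and a constant `C_n` such that
`|φψ|_n ≤ C_n |φ|_r |ψ|_s` for all Schwartz functions `φ, ψ`. -/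
theorem hermNorm_mul_le (d n : ℕ) :
    ∃ r s : ℕ, ∃ C : ℝ,
      ∀ (φ ψ χ : SchwartzMap (EuclideanSpace ℝ (Fin d)) ℝ),
        (∀ y, χ y = φ y * ψ y) →
        hermNorm d n (fun z => χ z) ≤
          C * hermNorm d r (fun z => φ z) * hermNorm d s (fun z => ψ z) := by
  obtain ⟨r, s, C, hprod⟩ :=
    exists_hermiteEigenvalue_pow_mul_abs_hermCoeff_schwartzMul_le d (n + d)
  refine ⟨r, s, √(hermiteSum d) * C, fun φ ψ χ hχ => ?_⟩
  obtain rfl : χ = schwartzMul φ ψ := SchwartzMap.ext hχ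
  calc hermNorm d n (schwartzMul φ ψ)
      ≤ √(hermiteSum d) * (C * hermNorm d r φ * hermNorm d s ψ) :=
        hermNorm_le_of_hermiteEigenvalue_pow_mul_abs_hermCoeff_le (hprod φ ψ)
    _ = √(hermiteSum d) * C * hermNorm d r φ * hermNorm d s ψ := by ring
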